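/- arXiv:1811.01377 — 2 statements merged into one kernel-verified Lean document; each statement's English description precedes it below -/
import Mathlib

section
/- Let g, l, N, k, d', d'', m be integers with g ≥ 2, l ≥ 1, N ≥ l + 2, k ≥ 0, and 0 ≤ m ≤ k, and let A', A'' be rational numbers with 0 ≤ A' ≤ k(l - 1) and 0 ≤ A'' ≤ k(l - 1). Set d = d' + d'' and δ = (d'' - d') + (A'' - A')/l. Assume δ > 0 and (d - δ)/2 - k > 2g - 1. Then N·(d'' + 1 - g) - (d'' - d' + 1 - g) + m > l·δ/2. -/
/-!
Put `e = (A'' - A') / l`, so `d'' - d' = δ - e`, and `e ≤ k` by the bounds on the weights.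
The largeness assumption on `d` gives `X := d'' + 1 - g > δ + k + g - e / 2 > 0`, so `N` may be
replaced by `l + 2`, and
`(l + 2) X - (δ - e + 1 - g) > (l + 1) δ + ((l + 2) k - l e / 2) + (l + 3) g - 1`,
which exceeds `l δ / 2` because `e ≤ k`, `δ > 0` and `g ≥ 2`.
-/

/-- Let `g, l, N, k, d', d'', m` be integers with `g ≥ 2`, `l ≥ 1`, `N ≥ l + 2`, `k ≥ 0`,
and `0 ≤ m ≤ k`, and let `A', A''` be rational numbers with `0 ≤ A' ≤ k(l - 1)` and
`0 ≤ A'' ≤ k(l - 1)`. Set `d = d' + d''` and `δ = (d'' - d') + (A'' - A')/l`. Assume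
`δ > 0` and `(d - δ)/2 - k > 2g - 1`. Then
`N·(d'' + 1 - g) - (d'' - d' + 1 - g) + m > l·δ/2`. -/
theorem parabolic_rank_two_wall_crossing_rank_ineq
    (g l N k d' d'' m : ℤ) (hg : 2 ≤ g) (hl : 1 ≤ l) (hN : l + 2 ≤ N)
    (hk : 0 ≤ k) (hm0 : 0 ≤ m) (hmk : m ≤ k)
    (A' A'' : ℚ) (hA'0 : 0 ≤ A') (hA'1 : A' ≤ (k : ℚ) * ((l : ℚ) - 1))
    (hA''0 : 0 ≤ A'') (hA''1 : A'' ≤ (k : ℚ) * ((l : ℚ) - 1))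
    (d : ℤ) (hd : d = d' + d'')
    (δ : ℚ) (hδ : δ = ((d'' : ℚ) - (d' : ℚ)) + (A'' - A') / (l : ℚ))
    (hδpos : 0 < δ) (hbig : ((d : ℚ) - δ) / 2 - (k : ℚ) > 2 * (g : ℚ) - 1) :
    (N : ℚ) * ((d'' : ℚ) + 1 - (g : ℚ)) - ((d'' : ℚ) - (d' : ℚ) + 1 - (g : ℚ)) + (m : ℚ)
      > (l : ℚ) * δ / 2 := by
  have hg' : (2 : ℚ) ≤ g := by exact_mod_cast hg
  have hl' : (1 : ℚ) ≤ l := by exact_mod_cast hl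
  have hN' : (l : ℚ) + 2 ≤ N := by exact_mod_cast hN
  have hk' : (0 : ℚ) ≤ k := by exact_mod_cast hk
  have hm' : (0 : ℚ) ≤ m := by exact_mod_cast hm0
  have hd' : (d : ℚ) = d' + d'' := by exact_mod_cast hd
  have he : (A'' - A') / (l : ℚ) ≤ k := by
    rw [div_le_iff₀ (by linarith)]
    linarith
  generalize (A'' - A') / (l : ℚ) = e at hδ he
  have hX : δ + k + g - e / 2 < (d'' : ℚ) + 1 - g := by linarith
  have hNX : ((l : ℚ) + 2) * ((d'' : ℚ) + 1 - g) ≤ N * ((d'' : ℚ) + 1 - g) :=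
    mul_le_mul_of_nonneg_right hN' (by linarith)
  have hlX : ((l : ℚ) + 2) * (δ + k + g - e / 2) < (l + 2) * ((d'' : ℚ) + 1 - g) :=
    mul_lt_mul_of_pos_left hX (by linarith)
  have hlδ : 0 ≤ (l : ℚ) * δ := by positivity
  have hlg : 0 ≤ (l : ℚ) * g := by positivity
  have hlk : 0 ≤ (l : ℚ) * k := by positivity
  have hle : (l : ℚ) * e ≤ l * k := mul_le_mul_of_nonneg_left he (by linarith)
  linarith
end

section
/- Let n, N, l, j be integers with n ≥ 1, l ≥ 0, N ≥ n + 2l, and j ≥ 0. Let r_1, ..., r_{j+1} be positive integers with r_1 + ... + r_{j+1} = n, and let D_1 ≤ D_2 ≤ ... ≤ D_{j+1} be nonnegative integers such that d' := ∑_{a=1}^{j+1} r_a · D_a ≥ 1. Then N·∑_{a=1}^{j+1} r_a (D_a + 1) D_a - ( ∑_{1 ≤ a < b ≤ j+1} r_a r_b (D_b - D_a + 1)(D_b - D_a) + l·∑_{a=1}^{j+1} r_a (D_a + 1) D_a + 2·l·d' ) ≥ 2·d'·(N - 2l - (n - 1)), and in particular this difference is strictly positive. -/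
/-!
Write `S = ∑ r_a (D_a + 1) D_a` and `P` for the sum over pairs `a < b`. Two estimates suffice.

* `S ≥ 2 d'`, because `(D + 1) D ≥ 2 D` for every integer `D`.
* `P ≤ (n - 1) S` (`pair_sum_le`): since `0 ≤ D_a ≤ D_b`, the term of the pair `(a, b)` is at most
  `r_a r_b (D_b + 1) D_b`, and for fixed `b` the multiplicities `r_a` with `a < b` add up to at most
  `n - r_b ≤ n - 1`.

Then `N S - P - l S - 2 l d' ≥ (N - l - (n - 1)) S - 2 l d' ≥ 2 d' (N - 2 l - (n - 1))`, as
`N - l - (n - 1) ≥ 0`. The right-hand side is positive since `d' ≥ 1` and `N - 2 l ≥ n`.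
-/

open Finset

theorem pair_sum_le {ι : Type*} [Fintype ι] [LinearOrder ι] (r D : ι → ℤ)
    (hr : ∀ a, 0 < r a) (hD0 : ∀ a, 0 ≤ D a) (hDmono : ∀ a b, a ≤ b → D a ≤ D b) :
    (∑ a, ∑ b ∈ univ.filter (fun b => a < b), r a * r b * (D b - D a + 1) * (D b - D a))
      ≤ (∑ a, r a - 1) * ∑ a, r a * (D a + 1) * D a := by
  simp_rw [Finset.sum_filter]
  rw [Finset.sum_comm, Finset.mul_sum]
  refine Finset.sum_le_sum fun b _ => ?_
  have hS : 0 ≤ r b * (D b + 1) * D b := by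
    have := hD0 b
    have := hr b
    positivity
  have hterm : ∀ a, (if a < b then r a * r b * (D b - D a + 1) * (D b - D a) else 0)
      ≤ (if a = b then 0 else r a) * (r b * (D b + 1) * D b) := by
    intro a
    rcases lt_trichotomy a b with h | h | h
    · have hab := hDmono a b h.le
      have ha := hD0 a
      have hq : (D b - D a + 1) * (D b - D a) ≤ (D b + 1) * D b :=
        mul_le_mul (by linarith) (by linarith) (by linarith) (by linarith)
      have hmul := mul_le_mul_of_nonneg_left hq (mul_pos (hr a) (hr b)).le
      rw [if_pos h, if_neg h.ne]
      linarith
    · simp [h]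
    · rw [if_neg h.not_gt, if_neg h.ne']
      exact mul_nonneg (hr a).le hS
  have hsum : ∑ a, (if a = b then 0 else r a) = ∑ a, r a - r b := by
    rw [eq_sub_iff_add_eq, ← Finset.add_sum_erase univ r (mem_univ b), add_comm,
      ← Finset.add_sum_erase univ (fun a => if a = b then 0 else r a) (mem_univ b)]
    simp only [if_true, zero_add, add_right_inj]
    exact Finset.sum_congr rfl fun a ha => if_neg (Finset.ne_of_mem_erase ha)
  refine (Finset.sum_le_sum fun a _ => hterm a).trans ?_
  rw [← Finset.sum_mul, hsum]
  exact mul_le_mul_of_nonneg_right (by linarith [Int.add_one_le_iff.mpr (hr b)]) hS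

/-- Let `n, N, l, j` be integers with `n ≥ 1`, `l ≥ 0`, `N ≥ n + 2l`, and `j ≥ 0`. Let
`r_1, ..., r_{j+1}` be positive integers with `r_1 + ... + r_{j+1} = n`, and let
`D_1 ≤ D_2 ≤ ... ≤ D_{j+1}` be nonnegative integers such that
`d' := ∑_{a} r_a · D_a ≥ 1`.  Then
`N·∑_a r_a (D_a + 1) D_a - (∑_{a<b} r_a r_b (D_b - D_a + 1)(D_b - D_a)
  + l·∑_a r_a (D_a + 1) D_a + 2·l·d') ≥ 2·d'·(N - 2l - (n - 1))`,
and in particular this difference is strictly positive. -/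
theorem quasimap_I_function_degree_estimate
    (n N l : ℤ) (j : ℕ) (hn : 1 ≤ n) (hl : 0 ≤ l) (hN : n + 2 * l ≤ N)
    (r D : Fin (j + 1) → ℤ)
    (hr : ∀ a, 0 < r a) (hrsum : ∑ a, r a = n)
    (hD0 : ∀ a, 0 ≤ D a) (hDmono : ∀ a b : Fin (j + 1), a ≤ b → D a ≤ D b)
    (d' : ℤ) (hd' : d' = ∑ a, r a * D a) (hd'1 : 1 ≤ d') :
    N * (∑ a, r a * (D a + 1) * D a)
        - ((∑ a, ∑ b ∈ univ.filter (fun b => a < b),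
              r a * r b * (D b - D a + 1) * (D b - D a))
          + l * (∑ a, r a * (D a + 1) * D a) + 2 * l * d')
      ≥ 2 * d' * (N - 2 * l - (n - 1)) ∧
    0 < N * (∑ a, r a * (D a + 1) * D a)
        - ((∑ a, ∑ b ∈ univ.filter (fun b => a < b),
              r a * r b * (D b - D a + 1) * (D b - D a))
          + l * (∑ a, r a * (D a + 1) * D a) + 2 * l * d') := by
  have hP := pair_sum_le r D hr hD0 hDmono
  rw [hrsum] at hP
  have hS : 2 * d' ≤ ∑ a, r a * (D a + 1) * D a := by
    rw [hd', Finset.mul_sum]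
    refine Finset.sum_le_sum fun a _ => ?_
    -- `D` is a nonnegative integer, so `D = 0` or `D ≥ 1`; either way `D * (D - 1) ≥ 0`.
    have hDD : 0 ≤ D a * (D a - 1) := by
      rcases (hD0 a).eq_or_lt with h | h
      · simp [← h]
      · exact mul_nonneg h.le (by linarith [Int.add_one_le_iff.mpr h])
    nlinarith [mul_nonneg (hr a).le hDD]
  have hmul := mul_nonneg (show 0 ≤ N - l - (n - 1) by linarith) (sub_nonneg.mpr hS)
  have hpos : 0 < 2 * d' * (N - 2 * l - (n - 1)) :=
    mul_pos (by linarith) (by linarith)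
  refine and_iff_left_of_imp (fun h => lt_of_lt_of_le hpos h) |>.mpr ?_
  linarith
end
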